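/- Let n ≥ 2, let 1 ≤ l < k ≤ n be integers, and set α = 1/(k−l). Then for every λ ∈ Γ_k and every ξ ∈ ℝ^n, −(1/σ_k(λ)) Σ_{p≠q} σ_{k−2}(λ|pq) ξ_p ξ_q + (1/σ_l(λ)) Σ_{p≠q} σ_{l−2}(λ|pq) ξ_p ξ_q ≥ ( (σ_k)_ξ(λ)/σ_k(λ) − (σ_l)_ξ(λ)/σ_l(λ) ) · ( (α−1)·(σ_k)_ξ(λ)/σ_k(λ) − (α+1)·(σ_l)_ξ(λ)/σ_l(λ) ). -/

import Mathlib

/-!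
With `a_m = (σ_m)_ξ / σ_m` and `c_m = (σ_m)_ξξ / σ_m - a_m ^ 2` (the first and second derivatives of
`log σ_m` along `ξ`), the claim reads `c_k - c_l + (a_k - a_l) ^ 2 / (k - l) ≤ 0`, which says
that `(σ_k / σ_l) ^ (1 / (k - l))` is concave along `ξ`. Summing over `m` and using
Cauchy–Schwarz, it follows from the case of consecutive indices, i.e. from the concavity of
`σ_{m+1} / σ_m` on `Γ_m` (`quotCoeff_nonpos`).

That concavity is proved by induction on `m`, following Marcus and Lopes. Euler's identity gives
`(m + 1) σ_{m+1} / σ_m = ∑ i, x_i y_i / (x_i + y_i)` with `y_i = σ_m(x|i) / σ_{m-1}(x|i)`; the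
function `x y / (x + y)` is concave on `x + y > 0` and nondecreasing in `y`, and `y_i` is concave by
the induction hypothesis, since deleting an entry maps `Γ_m` into `Γ_{m-1}` (`esum_erase_pos`).
The latter fact follows from Newton's inequality `σ_m σ_{m+2} ≤ σ_{m+1} ^ 2` (`newton`), which
holds because the derivatives of a real-rooted polynomial are real-rooted.

Derivatives along `ξ` are handled algebraically, as coefficients of the polynomials
`σ_m(x + t ξ)` in `t`.
-/

open Finset

/-- The `m`-th elementary symmetric polynomial of the entries of `x` indexed by `A`,
with the convention that it vanishes for negative `m` (and for `m` larger than `A.card`). -/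
noncomputable def esymmOn {n : ℕ} (A : Finset (Fin n)) (m : ℤ) (x : Fin n → ℝ) : ℝ :=
  if 0 ≤ m then ∑ s ∈ Finset.powersetCard m.toNat A, ∏ i ∈ s, x i else 0

/-- `esym m x` is σ_m(x), the `m`-th elementary symmetric polynomial of `x`. -/
noncomputable def esym {n : ℕ} (m : ℤ) (x : Fin n → ℝ) : ℝ := esymmOn Finset.univ m x

/-- `esymD1 m x i` is σ_m(x|i), the `m`-th elementary symmetric polynomial of the
entries of `x` with the `i`-th entry deleted. -/
noncomputable def esymD1 {n : ℕ} (m : ℤ) (x : Fin n → ℝ) (i : Fin n) : ℝ :=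
  esymmOn (Finset.univ.erase i) m x

/-- `esymD2 m x i j` is σ_m(x|ij), the `m`-th elementary symmetric polynomial of the
entries of `x` with the `i`-th and `j`-th entries deleted. -/
noncomputable def esymD2 {n : ℕ} (m : ℤ) (x : Fin n → ℝ) (i j : Fin n) : ℝ :=
  esymmOn ((Finset.univ.erase i).erase j) m x

/-- The Garding cone Γ_k. -/
def GardingCone (n k : ℕ) : Set (Fin n → ℝ) :=
  {x | ∀ m : ℕ, 1 ≤ m → m ≤ k → 0 < esym (m : ℤ) x}

/-- `(σ_m)_ξ(x)`, the derivative of σ_m at `x` in the diagonal direction `ξ`. -/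
noncomputable def esymDeriv {n : ℕ} (m : ℤ) (x ξ : Fin n → ℝ) : ℝ :=
  ∑ p, esymD1 (m - 1) x p * ξ p

/-- The divided difference `g(s,t)` of the exponential function. -/
noncomputable def expDD (s t : ℝ) : ℝ :=
  if s = t then Real.exp t else (Real.exp s - Real.exp t) / (s - t)

open Polynomial

/-! ### Elementary symmetric sums over a commutative ring -/

/-- The `m`-th elementary symmetric polynomial of the entries of `x` indexed by `A`, over an
arbitrary commutative ring and with a natural number index. -/
def esum {ι R : Type*} [CommRing R] (A : Finset ι) (m : ℕ) (x : ι → R) : R :=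
  ∑ s ∈ powersetCard m A, ∏ i ∈ s, x i

section esum

set_option linter.unusedSectionVars false

variable {ι R : Type*} [DecidableEq ι] [CommRing R]

lemma esum_zero (A : Finset ι) (x : ι → R) : esum A 0 x = 1 := by
  simp [esum]

lemma esum_empty_succ (m : ℕ) (x : ι → R) : esum ∅ (m + 1) x = 0 := by
  rw [esum, powersetCard_eq_empty.2 (by simp), sum_empty]

lemma esum_insert {A : Finset ι} {i : ι} (hi : i ∉ A) (m : ℕ) (x : ι → R) :
    esum (insert i A) (m + 1) x = esum A (m + 1) x + x i * esum A m x := by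
  unfold esum
  rw [powersetCard_succ_insert hi, sum_union, sum_image, mul_sum]
  · congr 1
    refine sum_congr rfl fun s hs => ?_
    rw [prod_insert fun h => hi ((mem_powersetCard.1 hs).1 h)]
  · intro s hs t ht h
    have hs' : i ∉ s := fun h => hi ((mem_powersetCard.1 hs).1 h)
    have ht' : i ∉ t := fun h => hi ((mem_powersetCard.1 ht).1 h)
    rw [← erase_insert hs', ← erase_insert ht', h]
  · rw [disjoint_left]
    intro s hs hs'
    obtain ⟨t, -, rfl⟩ := mem_image.1 hs'
    exact hi ((mem_powersetCard.1 hs).1 (mem_insert_self i t))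

lemma esum_erase {A : Finset ι} {i : ι} (hi : i ∈ A) (m : ℕ) (x : ι → R) :
    esum A (m + 1) x = esum (A.erase i) (m + 1) x + x i * esum (A.erase i) m x := by
  conv_lhs => rw [← insert_erase hi]
  exact esum_insert (notMem_erase i A) m x

lemma sum_insert_erase {A : Finset ι} {a : ι} (ha : a ∉ A) (g : Finset ι → ι → R) :
    ∑ i ∈ insert a A, g ((insert a A).erase i) i
      = g A a + ∑ i ∈ A, g (insert a (A.erase i)) i := by
  rw [sum_insert ha, erase_insert ha]
  congr 1
  refine sum_congr rfl fun i hi => ?_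
  have hne : a ≠ i := fun h => ha (h.symm ▸ hi)
  rw [erase_insert_of_ne hne]

/-- Euler's identity. -/
lemma euler (A : Finset ι) (m : ℕ) (x : ι → R) :
    ∑ i ∈ A, x i * esum (A.erase i) m x = (m + 1) * esum A (m + 1) x := by
  induction A using Finset.induction_on generalizing m with
  | empty => simp [esum_empty_succ]
  | insert a A ha ih =>
    rw [sum_insert_erase ha fun B i => x i * esum B m x, esum_insert ha]
    cases m with
    | zero =>
      have := ih 0
      simp only [esum_zero] at this ⊢
      rw [this]
      push_cast
      ring
    | succ m =>
      have h : ∀ i ∈ A, x i * esum (insert a (A.erase i)) (m + 1) x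
          = x i * esum (A.erase i) (m + 1) x + x a * (x i * esum (A.erase i) m x) := by
        intro i _
        rw [esum_insert fun h => ha (mem_of_mem_erase h)]
        ring
      rw [sum_congr rfl h, sum_add_distrib, ← mul_sum, ih, ih]
      push_cast
      ring

/-- Differentiating an elementary symmetric sum of polynomials. -/
lemma derivative_esum (A : Finset ι) (m : ℕ) (x : ι → R[X]) :
    derivative (esum A (m + 1) x) = ∑ i ∈ A, derivative (x i) * esum (A.erase i) m x := by
  induction A using Finset.induction_on generalizing m with
  | empty => simp [esum_empty_succ]
  | insert a A ha ih =>
    rw [sum_insert_erase ha fun B i => derivative (x i) * esum B m x, esum_insert ha,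
      derivative_add, derivative_mul, ih]
    cases m with
    | zero => simp [esum_zero, add_comm]
    | succ m =>
      have h : ∀ i ∈ A, derivative (x i) * esum (insert a (A.erase i)) (m + 1) x
          = derivative (x i) * esum (A.erase i) (m + 1) x
            + x a * (derivative (x i) * esum (A.erase i) m x) := by
        intro i _
        rw [esum_insert fun h => ha (mem_of_mem_erase h)]
        ring
      rw [sum_congr rfl h, sum_add_distrib, ← mul_sum, ih]
      ring

end esum

/-! ### Newton's inequality -/

/-- Laguerre's inequality `p p'' ≤ p' ^ 2` at `0` for a real-rooted polynomial. The property is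
stable under products. -/
lemma laguerre {p : ℝ[X]} (hp : p.Splits) :
    2 * p.coeff 0 * p.coeff 2 ≤ p.coeff 1 ^ 2 := by
  induction hp using Submonoid.closure_induction with
  | mem p hp =>
    rcases hp with ⟨a, rfl⟩ | ⟨a, rfl⟩ <;> simp [coeff_C, coeff_X]
  | one => simp [coeff_one]
  | mul f g _ _ hf hg =>
    have h1 : (f * g).coeff 1 = f.coeff 0 * g.coeff 1 + f.coeff 1 * g.coeff 0 := by
      simp [coeff_mul, Finset.Nat.antidiagonal_succ]
    have h2 : (f * g).coeff 2
        = f.coeff 0 * g.coeff 2 + f.coeff 1 * g.coeff 1 + f.coeff 2 * g.coeff 0 := by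
      simp [coeff_mul, Finset.Nat.antidiagonal_succ, add_assoc]
    rw [mul_coeff_zero, h1, h2]
    nlinarith [mul_le_mul_of_nonneg_left hf (sq_nonneg (g.coeff 0)),
      mul_le_mul_of_nonneg_left hg (sq_nonneg (f.coeff 0))]

/-- Rolle's theorem, counted with multiplicities. -/
lemma splits_derivative {p : ℝ[X]} (hp : p.Splits) : (derivative p).Splits := by
  rw [splits_iff_card_roots] at hp ⊢
  have h1 := card_roots_le_derivative p
  have h2 := natDegree_derivative_le p
  have h3 := card_roots' (derivative p)
  by_cases h : p.natDegree = 0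
  · omega
  · omega

/-- A form of Newton's inequality that passes from `derivative p` at `j` to `p` at `j + 1`. -/
lemma newton_coeff (j : ℕ) {p : ℝ[X]} (hp : p.Splits) :
    (j + 2) * (p.coeff j * p.coeff (j + 2)) ≤ (j + 1) * p.coeff (j + 1) ^ 2 := by
  induction j generalizing p with
  | zero =>
    have := laguerre hp
    simp only [Nat.cast_zero, zero_add]
    linarith
  | succ j ih =>
    have h := ih (splits_derivative hp)
    simp only [coeff_derivative] at h
    push_cast at h ⊢
    have hj : (0 : ℝ) < (j + 1) * (j + 2) := by positivity
    refine le_of_mul_le_mul_left ?_ hj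
    calc _ = _ := ?_
      _ ≤ _ := h
      _ = _ := ?_
    · ring
    · ring

section real

set_option linter.unusedSectionVars false

variable {ι : Type*} [DecidableEq ι]

lemma newton (A : Finset ι) (m : ℕ) (x : ι → ℝ) :
    esum A m x * esum A (m + 2) x ≤ esum A (m + 1) x ^ 2 := by
  by_cases hm : m + 2 ≤ #A
  · obtain ⟨j, hj⟩ := Nat.exists_eq_add_of_le hm
    have hs : (∏ i ∈ A, (X + C (x i))).Splits := Splits.prod fun i _ => Splits.X_add_C (x i)
    have h := newton_coeff j hs
    rw [prod_X_add_C_coeff A x (by omega), prod_X_add_C_coeff A x (by omega),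
      prod_X_add_C_coeff A x (by omega), show #A - j = m + 2 by omega,
      show #A - (j + 2) = m by omega, show #A - (j + 1) = m + 1 by omega] at h
    change (j + 2) * (esum A (m + 2) x * esum A m x) ≤ (j + 1) * esum A (m + 1) x ^ 2 at h
    have hj0 : (0 : ℝ) ≤ j := Nat.cast_nonneg j
    by_contra! hlt
    nlinarith [sq_nonneg (esum A (m + 1) x)]
  · have h0 : esum A (m + 2) x = 0 := by
      unfold esum
      rw [powersetCard_eq_empty.2 (by omega), sum_empty]
    rw [h0, mul_zero]
    positivity

/-! ### Deleting an entry in the Garding cone -/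

lemma esum_erase_pos {A : Finset ι} {i : ι} (hi : i ∈ A) {x : ι → ℝ} (m : ℕ)
    (hx : ∀ j ≤ m + 1, 0 < esum A j x) : 0 < esum (A.erase i) m x := by
  induction m with
  | zero => simp [esum_zero]
  | succ m ih =>
    have h0 := ih fun j hj => hx j (by omega)
    have h1 := hx (m + 1) (by omega)
    have h2 := hx (m + 2) (by omega)
    have hN := newton (A.erase i) m x
    rw [esum_erase hi] at h1 h2
    by_contra! hneg
    -- With `s_j = σ_j(x|i)`: `s_{m+1} ≤ 0` gives
    -- `s_m * s_{m+2} > - x_i * s_m * s_{m+1} ≥ s_{m+1} ^ 2`, against Newton's inequality.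
    nlinarith [mul_pos h0 h2, mul_nonneg h1.le (neg_nonneg.2 hneg)]

/-! ### Concavity of quotients of consecutive elementary symmetric polynomials -/

/-- The coefficient of `t ^ 2` in the power series `f / g`, i.e. half of the second derivative of
`f / g` at `0` (for `g.coeff 0 ≠ 0`). -/
noncomputable def quotCoeff (f g : ℝ[X]) : ℝ :=
  f.coeff 2 / g.coeff 0 - f.coeff 1 * g.coeff 1 / g.coeff 0 ^ 2
    - f.coeff 0 * g.coeff 2 / g.coeff 0 ^ 2 + f.coeff 0 * g.coeff 1 ^ 2 / g.coeff 0 ^ 3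

lemma quotCoeff_sum (A : Finset ι) (f : ι → ℝ[X]) (g : ℝ[X]) :
    quotCoeff (∑ i ∈ A, f i) g = ∑ i ∈ A, quotCoeff (f i) g := by
  simp only [quotCoeff, finsetSum_coeff, sum_add_distrib, sum_sub_distrib, sum_div, sum_mul]

/-- The parametrised line `t ↦ x + t ξ`. -/
noncomputable def line (x ξ : ι → ℝ) (i : ι) : ℝ[X] := C (x i) + C (ξ i) * X

lemma coeff_zero_esum_line (A : Finset ι) (m : ℕ) (x ξ : ι → ℝ) :
    (esum A m (line x ξ)).coeff 0 = esum A m x := by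
  simp [esum, line, coeff_zero_eq_eval_zero, eval_finsetSum, eval_prod]

lemma derivative_line (x ξ : ι → ℝ) (i : ι) : derivative (line x ξ i) = C (ξ i) := by
  simp [line]

lemma coeff_one_esum_line (A : Finset ι) (m : ℕ) (x ξ : ι → ℝ) :
    (esum A (m + 1) (line x ξ)).coeff 1 = ∑ i ∈ A, esum (A.erase i) m x * ξ i := by
  have h := congrArg (fun p => coeff p 0) (derivative_esum A m (line x ξ))
  simp only [coeff_derivative, finsetSum_coeff, derivative_line, coeff_C_mul,
    coeff_zero_esum_line] at h
  simpa [mul_comm] using h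

lemma coeff_two_esum_line (A : Finset ι) (m : ℕ) (x ξ : ι → ℝ) :
    2 * (esum A (m + 2) (line x ξ)).coeff 2
      = ∑ p ∈ A, ∑ q ∈ A.erase p, esum ((A.erase p).erase q) m x * ξ p * ξ q := by
  have h := congrArg (fun p => coeff p 1) (derivative_esum A (m + 1) (line x ξ))
  simp only [coeff_derivative, finsetSum_coeff, derivative_line, coeff_C_mul,
    coeff_one_esum_line, mul_sum] at h
  rw [show (2 : ℝ) * (esum A (m + 2) (line x ξ)).coeff 2
    = (esum A (m + 2) (line x ξ)).coeff 2 * (((1 : ℕ) : ℝ) + 1) by push_cast; ring, h]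
  refine sum_congr rfl fun p _ => sum_congr rfl fun q _ => ?_
  ring

lemma coeff_two_esum_one_line (A : Finset ι) (x ξ : ι → ℝ) :
    (esum A 1 (line x ξ)).coeff 2 = 0 := by
  have h := euler A 0 (line x ξ)
  simp only [esum_zero, mul_one, Nat.cast_zero, zero_add, one_mul] at h
  rw [← h, finsetSum_coeff]
  refine sum_eq_zero fun i _ => ?_
  simp [line]

/-- Concavity and monotonicity of `x y / (x + y)` for `y = u / v`: the first summand carries the
second derivative of `y`, the second one is the Hessian term. -/
lemma quotCoeff_parallel (a b : ℝ) (u v : ℝ[X]) (hv : 0 < v.coeff 0)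
    (hg : 0 < u.coeff 0 + a * v.coeff 0) (h : quotCoeff u v ≤ 0) :
    quotCoeff ((C a + C b * X) * u) (u + (C a + C b * X) * v) ≤ 0 := by
  have key : quotCoeff ((C a + C b * X) * u) (u + (C a + C b * X) * v)
      = (a * v.coeff 0 / (u.coeff 0 + a * v.coeff 0)) ^ 2 * quotCoeff u v
        - (b * u.coeff 0 * v.coeff 0 - a * (u.coeff 1 * v.coeff 0 - u.coeff 0 * v.coeff 1)) ^ 2
          / ((u.coeff 0 + a * v.coeff 0) ^ 3 * v.coeff 0) := by
    have e0 : ∀ w : ℝ[X], ((C a + C b * X) * w).coeff 0 = a * w.coeff 0 := by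
      intro w; simp
    have e1 : ∀ w : ℝ[X], ((C a + C b * X) * w).coeff 1 = a * w.coeff 1 + b * w.coeff 0 := by
      intro w; rw [add_mul, mul_assoc]; simp [coeff_X_mul]
    have e2 : ∀ w : ℝ[X], ((C a + C b * X) * w).coeff 2 = a * w.coeff 2 + b * w.coeff 1 := by
      intro w; rw [add_mul, mul_assoc]; simp [coeff_X_mul]
    simp only [quotCoeff, coeff_add, e0, e1, e2]
    have hv' := hv.ne'
    have hg' := hg.ne'
    generalize u.coeff 0 = u0 at *
    generalize u.coeff 1 = u1 at *
    generalize u.coeff 2 = u2 at *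
    generalize v.coeff 0 = v0 at *
    generalize v.coeff 1 = v1 at *
    generalize v.coeff 2 = v2 at *
    field_simp
    ring
  rw [key]
  have h1 := mul_nonpos_of_nonneg_of_nonpos
    (sq_nonneg (a * v.coeff 0 / (u.coeff 0 + a * v.coeff 0))) h
  have h2 : 0 ≤ (b * u.coeff 0 * v.coeff 0
      - a * (u.coeff 1 * v.coeff 0 - u.coeff 0 * v.coeff 1)) ^ 2
        / ((u.coeff 0 + a * v.coeff 0) ^ 3 * v.coeff 0) := by positivity
  linarith

lemma quotCoeff_nonpos (A : Finset ι) (m : ℕ) (x ξ : ι → ℝ)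
    (hx : ∀ j ≤ m, 0 < esum A j x) :
    quotCoeff (esum A (m + 1) (line x ξ)) (esum A m (line x ξ)) ≤ 0 := by
  induction m generalizing A with
  | zero =>
    simp [quotCoeff, esum_zero, coeff_one, coeff_two_esum_one_line]
  | succ m ih =>
    have hE : ∑ i ∈ A, line x ξ i * esum (A.erase i) (m + 1) (line x ξ)
        = C ((m : ℝ) + 2) * esum A (m + 2) (line x ξ) := by
      rw [euler]
      simp only [map_add, map_natCast, map_ofNat]
      push_cast
      ring
    have hC : quotCoeff (C ((m : ℝ) + 2) * esum A (m + 2) (line x ξ)) (esum A (m + 1) (line x ξ))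
        = (m + 2) * quotCoeff (esum A (m + 2) (line x ξ)) (esum A (m + 1) (line x ξ)) := by
      simp only [quotCoeff, coeff_C_mul]
      ring
    have hS : (m + 2) * quotCoeff (esum A (m + 2) (line x ξ)) (esum A (m + 1) (line x ξ)) ≤ 0 := by
      rw [← hC, ← hE, quotCoeff_sum]
      refine sum_nonpos fun i hi => ?_
      rw [esum_erase hi m (line x ξ)]
      refine quotCoeff_parallel (x i) (ξ i) _ _ ?_ ?_ ?_
      · rw [coeff_zero_esum_line]
        exact esum_erase_pos hi m hx
      · rw [coeff_zero_esum_line, coeff_zero_esum_line, ← esum_erase hi]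
        exact hx (m + 1) le_rfl
      · exact ih _ fun j hj => esum_erase_pos hi j fun r hr => hx r (by omega)
    have hm : (0 : ℝ) < m + 2 := by positivity
    exact nonpos_of_mul_nonpos_right hS hm

end real

/-! ### Telescoping -/

/-- Summing the inequalities for consecutive indices, with Cauchy–Schwarz. -/
lemma telescope (a c : ℕ → ℝ) (l d : ℕ)
    (h : ∀ j < d, c (l + j + 1) - c (l + j) + (a (l + j + 1) - a (l + j)) ^ 2 ≤ 0) :
    c (l + d) - c l + (1 / (d : ℝ)) * (a (l + d) - a l) ^ 2 ≤ 0 := by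
  rcases Nat.eq_zero_or_pos d with rfl | hd
  · simp
  have hs := sum_nonpos fun j hj => h j (mem_range.1 hj)
  rw [sum_add_distrib] at hs
  have hc := sum_range_sub (fun j => c (l + j)) d
  have ha := sum_range_sub (fun j => a (l + j)) d
  have hcs := sq_sum_le_card_mul_sum_sq (s := range d) (f := fun j => a (l + j + 1) - a (l + j))
  simp only [← add_assoc, add_zero] at hc ha
  rw [hc] at hs
  rw [ha, card_range] at hcs
  have hd' : (0 : ℝ) < d := by exact_mod_cast hd
  have : (1 / (d : ℝ)) * (a (l + d) - a l) ^ 2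
      ≤ ∑ j ∈ range d, (a (l + j + 1) - a (l + j)) ^ 2 := by
    rw [one_div, inv_mul_le_iff₀ hd']
    exact hcs
  linarith

/-! ### Translation to the integer-indexed symmetric polynomials -/

lemma esymmOn_natCast {n : ℕ} (A : Finset (Fin n)) (m : ℕ) (x : Fin n → ℝ) :
    esymmOn A (m : ℤ) x = esum A m x := by
  simp [esymmOn, esum]

lemma esymDeriv_eq {n : ℕ} (m : ℕ) (hm : 1 ≤ m) (x ξ : Fin n → ℝ) :
    esymDeriv (m : ℤ) x ξ = (esum univ m (line x ξ)).coeff 1 := by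
  obtain ⟨m, rfl⟩ := Nat.exists_eq_add_of_le' hm
  simp only [esymDeriv, esymD1, coeff_one_esum_line]
  rw [show ((m + 1 : ℕ) : ℤ) - 1 = (m : ℤ) by push_cast; ring]
  simp only [esymmOn_natCast]

lemma esymD2_sum_eq {n : ℕ} (m : ℕ) (hm : 1 ≤ m) (x ξ : Fin n → ℝ) :
    ∑ p : Fin n, ∑ q ∈ univ.erase p, esymD2 ((m : ℤ) - 2) x p q * ξ p * ξ q
      = 2 * (esum univ m (line x ξ)).coeff 2 := by
  rcases Nat.lt_or_ge m 2 with h | h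
  · obtain rfl : m = 1 := by omega
    rw [coeff_two_esum_one_line]
    simp [esymD2, esymmOn]
  · obtain ⟨m, rfl⟩ := Nat.exists_eq_add_of_le' h
    rw [coeff_two_esum_line, show ((m + 2 : ℕ) : ℤ) - 2 = (m : ℤ) by push_cast; ring]
    simp only [esymD2, esymmOn_natCast]

/-- Lemma 7, inequality (2.2). -/
theorem concavity_ineq (n k l : ℕ) (hn : 2 ≤ n) (hl : 1 ≤ l) (hlk : l < k) (hkn : k ≤ n)
    (α : ℝ) (hα : α = 1 / ((k : ℝ) - (l : ℝ)))
    (lam : Fin n → ℝ) (hlam : lam ∈ GardingCone n k) (ξ : Fin n → ℝ) :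
    -(1 / esym (k : ℤ) lam) *
        (∑ p : Fin n, ∑ q ∈ Finset.univ.erase p, esymD2 ((k : ℤ) - 2) lam p q * ξ p * ξ q)
      + (1 / esym (l : ℤ) lam) *
        (∑ p : Fin n, ∑ q ∈ Finset.univ.erase p, esymD2 ((l : ℤ) - 2) lam p q * ξ p * ξ q)
    ≥ (esymDeriv (k : ℤ) lam ξ / esym (k : ℤ) lam
          - esymDeriv (l : ℤ) lam ξ / esym (l : ℤ) lam)
        * ((α - 1) * (esymDeriv (k : ℤ) lam ξ / esym (k : ℤ) lam)
          - (α + 1) * (esymDeriv (l : ℤ) lam ξ / esym (l : ℤ) lam)) := by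
  have hpos : ∀ j ≤ k, 0 < esum univ j lam := by
    intro j hj
    rcases Nat.eq_zero_or_pos j with rfl | hj0
    · simp [esum_zero]
    · have := hlam j hj0 hj
      rwa [esym, esymmOn_natCast] at this
  rw [esymD2_sum_eq k (by omega), esymD2_sum_eq l hl, esymDeriv_eq k (by omega),
    esymDeriv_eq l hl, esym, esym, esymmOn_natCast, esymmOn_natCast]
  obtain ⟨d, rfl⟩ := Nat.exists_eq_add_of_le hlk.le
  let a : ℕ → ℝ := fun m => (esum univ m (line lam ξ)).coeff 1 / esum univ m lam
  let c : ℕ → ℝ := fun m =>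
    2 * (esum univ m (line lam ξ)).coeff 2 / esum univ m lam - a m ^ 2
  have h := telescope a c l d fun j hj => by
    have hq := quotCoeff_nonpos univ (l + j) lam ξ fun r hr => hpos r (by omega)
    have h0 := hpos (l + j) (by omega)
    have h1 := hpos (l + j + 1) (by omega)
    simp only [quotCoeff, coeff_zero_esum_line] at hq
    -- Multiplying `(f / g)''` by `g / f` gives `(log (f / g))'' + (log (f / g))' ^ 2`.
    have hm := mul_nonpos_of_nonneg_of_nonpos
      (by positivity : 0 ≤ 2 * esum univ (l + j) lam / esum univ (l + j + 1) lam) hq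
    refine le_of_eq_of_le ?_ hm
    simp only [a, c]
    have h0' := h0.ne'
    have h1' := h1.ne'
    field_simp
    ring
  have hα' : α = 1 / (d : ℝ) := by
    rw [hα]
    push_cast
    rw [add_sub_cancel_left]
  rw [← hα'] at h
  have hring : -(1 / esum univ (l + d) lam) * (2 * (esum univ (l + d) (line lam ξ)).coeff 2)
      + (1 / esum univ l lam) * (2 * (esum univ l (line lam ξ)).coeff 2)
      = c l + a l ^ 2 - (c (l + d) + a (l + d) ^ 2) := by
    simp only [c]
    ring
  rw [hring]
  change _ ≥ (a (l + d) - a l) * ((α - 1) * a (l + d) - (α + 1) * a l)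
  linarith
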